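/- Let p be an odd prime, Δ an integer not divisible by p, and set ε = 1 if the image of Δ in ℤ/pℤ is a square and ε = −1 otherwise. Let t be a nonzero integer with p-adic valuation T. For a natural number ℓ let X_ℓ = N_ℓ / p^{2ℓ}, where N_ℓ is the number of pairs (x, y) ∈ (ℤ/p^ℓℤ)² with x² − Δ̄·y² = t̄². Then for every real z with |z| < 1, setting w = z/p, the series ∑_{ℓ≥0} z^ℓ · X_ℓ converges with sum (1 − ε·w/p)(1 − ε·w^{2T+1}) / ((1 − w)(1 − ε·w)). -/

import Mathlib

open Finset

lemma sum_range_zmod (n : ℕ) [NeZero n] {M : Type*} [AddCommMonoid M] (f : ZMod n → M) :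
    ∑ x ∈ range n, f (x : ZMod n) = ∑ x : ZMod n, f x := by
  refine Finset.sum_nbij' (fun x : ℕ => (x : ZMod n)) (fun x => x.val) ?_ ?_ ?_ ?_ ?_
  · simp
  · intro a _; simpa using ZMod.val_lt a
  · intro a ha; exact ZMod.val_cast_of_lt (by simpa using ha)
  · intro a _; simp
  · simp

lemma sum_range_split (m n : ℕ) {M : Type*} [AddCommMonoid M] (f : ℕ → M) :
    ∑ x ∈ range (m * n), f x = ∑ x ∈ range m, ∑ a ∈ range n, f (x + m * a) := by
  induction n with
  | zero => simp
  | succ n ih =>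
    rw [Nat.mul_succ, Finset.sum_range_add, ih, ← Finset.sum_add_distrib]
    refine Finset.sum_congr rfl fun x _ => ?_
    rw [Finset.sum_range_succ, add_comm (m * n) x]

lemma sum2_split (m n : ℕ) {M : Type*} [AddCommMonoid M] (f : ℕ → ℕ → M) :
    ∑ x ∈ range (m * n), ∑ y ∈ range (m * n), f x y =
    ∑ x ∈ range m, ∑ y ∈ range m, ∑ a ∈ range n, ∑ b ∈ range n, f (x + m * a) (y + m * b) := by
  rw [sum_range_split]
  refine Finset.sum_congr rfl fun x _ => ?_
  simp only [sum_range_split m n (fun y => f _ y)]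
  rw [Finset.sum_comm]

/-- number of solutions -/
def NN (p : ℕ) (Δ c : ℤ) (l : ℕ) : ℕ :=
  ∑ x ∈ range (p ^ l), ∑ y ∈ range (p ^ l),
    if ((p : ℤ) ^ l ∣ (x : ℤ) ^ 2 - Δ * (y : ℤ) ^ 2 - c) then 1 else 0

/-- number of primitive solutions -/
def PP (p : ℕ) (Δ c : ℤ) (l : ℕ) : ℕ :=
  ∑ x ∈ range (p ^ l), ∑ y ∈ range (p ^ l),
    if ((p : ℤ) ^ l ∣ (x : ℤ) ^ 2 - Δ * (y : ℤ) ^ 2 - c ∧ ¬ (((p : ℤ) ∣ (x : ℤ)) ∧ ((p : ℤ) ∣ (y : ℤ))))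
      then 1 else 0

/-- number of nonprimitive solutions -/
def QQ (p : ℕ) (Δ c : ℤ) (l : ℕ) : ℕ :=
  ∑ x ∈ range (p ^ l), ∑ y ∈ range (p ^ l),
    if ((p : ℤ) ^ l ∣ (x : ℤ) ^ 2 - Δ * (y : ℤ) ^ 2 - c ∧ (((p : ℤ) ∣ (x : ℤ)) ∧ ((p : ℤ) ∣ (y : ℤ))))
      then 1 else 0

lemma NN_eq (p : ℕ) (Δ c : ℤ) (l : ℕ) : NN p Δ c l = PP p Δ c l + QQ p Δ c l := by
  unfold NN PP QQ
  simp only [← Finset.sum_add_distrib]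
  refine Finset.sum_congr rfl fun x _ => Finset.sum_congr rfl fun y _ => ?_
  split_ifs <;> first | rfl | (exfalso; tauto)

lemma card_eq (p : ℕ) (hp : p.Prime) (Δ t : ℤ) (l : ℕ) :
    Nat.card {xy : ZMod (p ^ l) × ZMod (p ^ l) //
            xy.1 ^ 2 - (Δ : ZMod (p ^ l)) * xy.2 ^ 2 = (t : ZMod (p ^ l)) ^ 2} = NN p Δ (t ^ 2) l := by
  have : NeZero (p ^ l) := ⟨pow_ne_zero _ hp.ne_zero⟩
  rw [Nat.card_eq_fintype_card, Fintype.card_subtype, Finset.card_filter, Fintype.sum_prod_type]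
  rw [← sum_range_zmod]
  unfold NN
  refine Finset.sum_congr rfl fun x _ => ?_
  rw [← sum_range_zmod]
  refine Finset.sum_congr rfl fun y _ => ?_
  refine if_congr ?_ rfl rfl
  have := ZMod.intCast_zmod_eq_zero_iff_dvd ((x : ℤ) ^ 2 - Δ * (y : ℤ) ^ 2 - t ^ 2) (p ^ l)
  push_cast at this
  rw [← this, sub_eq_zero]

lemma lin1 (p : ℕ) (hp : p.Prime) (α γ : ℤ) (h : ¬ (p : ℤ) ∣ α) :
    ∑ a ∈ range p, (if (p : ℤ) ∣ γ + α * a then 1 else 0) = 1 := by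
  have := Fact.mk hp
  have hα : (α : ZMod p) ≠ 0 := by rwa [Ne, ZMod.intCast_zmod_eq_zero_iff_dvd]
  have : ∀ a : ℕ, (if (p : ℤ) ∣ γ + α * a then 1 else 0) =
      (fun u : ZMod p => if u = - (γ : ZMod p) / α then 1 else 0) (a : ZMod p) := by
    intro a
    refine if_congr ?_ rfl rfl
    rw [← ZMod.intCast_zmod_eq_zero_iff_dvd, eq_div_iff hα]
    push_cast
    constructor <;> intro h <;> linear_combination h
  simp only [this]
  rw [sum_range_zmod p (fun u : ZMod p => if u = - (γ : ZMod p) / α then 1 else 0)]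
  simp

lemma lin2 (p : ℕ) (hp : p.Prime) (α β γ : ℤ) (h : ¬ ((p : ℤ) ∣ α ∧ (p : ℤ) ∣ β)) :
    ∑ a ∈ range p, ∑ b ∈ range p, (if (p : ℤ) ∣ γ + α * a + β * b then 1 else 0) = p := by
  by_cases hβ : (p : ℤ) ∣ β
  · have hα : ¬ (p : ℤ) ∣ α := fun h' => h ⟨h', hβ⟩
    rw [Finset.sum_comm]
    have : ∀ a b : ℕ, γ + α * a + β * b = (γ + β * b) + α * a := by intros; ring
    simp only [this, lin1 p hp α _ hα]
    simp
  · simp only [lin1 p hp β _ hβ]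
    simp

lemma PP_succ (p : ℕ) (hp : p.Prime) (hp2 : p ≠ 2) (Δ c : ℤ) (hΔ : ¬ (p : ℤ) ∣ Δ) (l : ℕ) (hl : 1 ≤ l) :
    PP p Δ c (l + 1) = p * PP p Δ c l := by
  have hpi : Prime (p : ℤ) := Nat.prime_iff_prime_int.mp hp
  have h2 : ¬ (p : ℤ) ∣ 2 := by
    intro h
    have : p ∣ 2 := by exact_mod_cast h
    exact hp2 ((Nat.prime_dvd_prime_iff_eq hp Nat.prime_two).mp this)
  unfold PP
  conv_lhs => rw [pow_succ p l]
  rw [sum2_split]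
  simp only [Finset.mul_sum]
  refine Finset.sum_congr rfl fun x _ => Finset.sum_congr rfl fun y _ => ?_
  obtain ⟨k, rfl⟩ : ∃ k, l = k + 1 := ⟨l - 1, by omega⟩
  have hd : ∀ x a : ℕ, (p : ℤ) ∣ ((x + p ^ (k + 1) * a : ℕ) : ℤ) ↔ (p : ℤ) ∣ (x : ℤ) := by
    intro x a
    have : ((x + p ^ (k + 1) * a : ℕ) : ℤ) = x + p * (p ^ k * a) := by push_cast; ring
    rw [this]
    exact (Int.dvd_add_left ⟨_, rfl⟩)
  simp only [hd]
  by_cases hprim : (p : ℤ) ∣ (x : ℤ) ∧ (p : ℤ) ∣ (y : ℤ)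
  · simp [hprim]
  by_cases hQ : (p : ℤ) ^ (k + 1) ∣ (x : ℤ) ^ 2 - Δ * (y : ℤ) ^ 2 - c
  · rw [if_pos ⟨hQ, hprim⟩, mul_one]
    obtain ⟨q, hq⟩ := hQ
    refine Eq.trans ?_ (lin2 p hp (2 * x) (- (2 * Δ * y)) q ?_)
    · refine Finset.sum_congr rfl fun a _ => Finset.sum_congr rfl fun b _ => ?_
      refine if_congr ?_ rfl rfl
      simp only [hprim, not_false_eq_true, and_true]
      have e : ((x + p ^ (k + 1) * a : ℕ) : ℤ) ^ 2 - Δ * ((y + p ^ (k + 1) * b : ℕ) : ℤ) ^ 2 - c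
        = p ^ (k + 1) * ((q + 2 * x * a + -(2 * Δ * y) * b) + p * (p ^ k * (a ^ 2 - Δ * b ^ 2))) := by
        push_cast
        linear_combination hq
      rw [e, pow_succ (p : ℤ) (k + 1), mul_dvd_mul_iff_left (pow_ne_zero _ hpi.ne_zero)]
      exact (Int.dvd_add_left ⟨_, rfl⟩)
    · rintro ⟨h, h'⟩
      refine hprim ⟨(hpi.dvd_or_dvd h).resolve_left h2, ?_⟩
      rw [dvd_neg] at h'
      refine (hpi.dvd_or_dvd h').resolve_left fun h => ?_
      exact (hpi.dvd_or_dvd h).elim h2 hΔ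
  · rw [if_neg (fun h => hQ h.1), mul_zero]
    refine Finset.sum_eq_zero fun a _ => Finset.sum_eq_zero fun b _ => if_neg ?_
    rintro ⟨h, -⟩
    apply hQ
    have h := (pow_dvd_pow (p : ℤ) (Nat.le_succ (k + 1))).trans h
    have e : ((x + p ^ (k + 1) * a : ℕ) : ℤ) ^ 2 - Δ * ((y + p ^ (k + 1) * b : ℕ) : ℤ) ^ 2 - c
        = (x : ℤ) ^ 2 - Δ * (y : ℤ) ^ 2 - c + p ^ (k + 1) * (2 * x * a + -(2 * Δ * y) * b + (p ^ (k + 1) * (a ^ 2 - Δ * b ^ 2))) := by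
      push_cast
      ring
    rw [e] at h
    exact (Int.dvd_add_left ⟨_, rfl⟩).mp h

lemma PP_eq (p : ℕ) (hp : p.Prime) (hp2 : p ≠ 2) (Δ c : ℤ) (hΔ : ¬ (p : ℤ) ∣ Δ) (l : ℕ) :
    PP p Δ c (l + 1) = p ^ l * PP p Δ c 1 := by
  induction l with
  | zero => simp
  | succ l ih => rw [PP_succ p hp hp2 Δ c hΔ _ (by omega), ih]; ring

lemma QQ_pos (p : ℕ) (hp : p.Prime) (Δ c : ℤ) (l : ℕ) : QQ p Δ c (l + 1) =
    ∑ x ∈ range (p ^ l), ∑ y ∈ range (p ^ l),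
    if ((p : ℤ) ^ (l + 1) ∣ ((p * x : ℕ) : ℤ) ^ 2 - Δ * ((p * y : ℕ) : ℤ) ^ 2 - c) then 1 else 0 := by
  unfold QQ
  conv_lhs => rw [pow_succ' p l]
  have key : ∀ r s a b : ℕ, r ∈ range p → s ∈ range p → 
     (((p : ℤ) ∣ ((r + p * a : ℕ) : ℤ) ∧ (p : ℤ) ∣ ((s + p * b : ℕ) : ℤ)) ↔ r = 0 ∧ s = 0) := by
    intro r s a b hr hs
    have : ∀ r a : ℕ, r ∈ range p → ((p : ℤ) ∣ ((r + p * a : ℕ) : ℤ) ↔ r = 0) := by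
      intro r a hr
      rw [Int.natCast_dvd_natCast, Nat.dvd_add_left ⟨_, rfl⟩]
      constructor
      · intro h
        exact Nat.eq_zero_of_dvd_of_lt h (by simpa using hr)
      · rintro rfl; simp
    rw [this r a hr, this s b hs]
  rw [sum2_split, Finset.sum_eq_single 0, Finset.sum_eq_single 0]
  · refine Finset.sum_congr rfl fun a _ => Finset.sum_congr rfl fun b _ => ?_
    refine if_congr ?_ rfl rfl
    rw [key 0 0 a b (by simp [hp.pos]) (by simp [hp.pos])]
    simp
  · intro s hs h0
    refine Finset.sum_eq_zero fun a _ => Finset.sum_eq_zero fun b _ => if_neg ?_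
    rw [key 0 s a b (by simp [hp.pos]) hs]
    tauto
  · simp [hp.ne_zero]
  · intro s hs h0
    refine Finset.sum_eq_zero fun r hr => Finset.sum_eq_zero fun a _ => Finset.sum_eq_zero fun b _ => if_neg ?_
    rw [key s r a b hs hr]
    tauto
  · simp [hp.ne_zero]

lemma QQ_unit (p : ℕ) (hp : p.Prime) (Δ c : ℤ) (hc : ¬ (p : ℤ) ∣ c) (l : ℕ) : QQ p Δ c (l + 1) = 0 := by
  rw [QQ_pos p hp]
  refine Finset.sum_eq_zero fun a _ => Finset.sum_eq_zero fun b _ => if_neg fun h => hc ?_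
  have h := (dvd_pow_self (p : ℤ) (Nat.succ_ne_zero l)).trans h
  have e : ((p * a : ℕ) : ℤ) ^ 2 - Δ * ((p * b : ℕ) : ℤ) ^ 2 - c = p * (p * (a ^ 2 - Δ * b ^ 2)) - c := by
    push_cast; ring
  rw [e] at h
  exact (dvd_sub_right ⟨_, rfl⟩).mp h

lemma QQ_one (p : ℕ) (hp : p.Prime) (Δ c : ℤ) (hc : (p : ℤ) ∣ c) : QQ p Δ c 1 = 1 := by
  have := QQ_pos p hp Δ c 0
  rw [this]
  simp only [pow_zero, Finset.range_one, Finset.sum_singleton]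
  simp [hc]

lemma QQ_two (p : ℕ) (hp : p.Prime) (Δ c : ℤ) (l : ℕ) : QQ p Δ (p ^ 2 * c) (l + 2) = p ^ 2 * NN p Δ c l := by
  have hpi : Prime (p : ℤ) := Nat.prime_iff_prime_int.mp hp
  rw [QQ_pos p hp Δ _ (l + 1)]
  conv_lhs => rw [pow_succ p l]
  rw [sum2_split]
  unfold NN
  simp only [Finset.mul_sum]
  refine Finset.sum_congr rfl fun x _ => Finset.sum_congr rfl fun y _ => ?_
  have : ∀ a b : ℕ, ((p : ℤ) ^ (l + 1 + 1) ∣ ((p * (x + p ^ l * a) : ℕ) : ℤ) ^ 2 - Δ * ((p * (y + p ^ l * b) : ℕ) : ℤ) ^ 2 - p ^ 2 * c) ↔ ((p : ℤ) ^ l ∣ (x : ℤ) ^ 2 - Δ * (y : ℤ) ^ 2 - c) := by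
    intro a b
    have e : ((p * (x + p ^ l * a) : ℕ) : ℤ) ^ 2 - Δ * ((p * (y + p ^ l * b) : ℕ) : ℤ) ^ 2 - p ^ 2 * c
      = p ^ 2 * ((x : ℤ) ^ 2 - Δ * (y : ℤ) ^ 2 - c + p ^ l * (2 * x * a + -(2 * Δ * y) * b + (p ^ l * (a ^ 2 - Δ * b ^ 2)))) := by
      push_cast; ring
    rw [e, show (p : ℤ) ^ (l + 1 + 1) = p ^ 2 * p ^ l by ring, mul_dvd_mul_iff_left (pow_ne_zero _ hpi.ne_zero)]
    exact (Int.dvd_add_left ⟨_, rfl⟩)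
  simp only [this, Finset.sum_const, Finset.card_range, smul_eq_mul]
  ring

lemma NN_one (p : ℕ) [Fact p.Prime] (Δ c : ℤ) : NN p Δ c 1 =
    ∑ x : ZMod p, ∑ y : ZMod p, if x ^ 2 - (Δ : ZMod p) * y ^ 2 = c then 1 else 0 := by
  unfold NN
  rw [pow_one, ← sum_range_zmod]
  refine Finset.sum_congr rfl fun x _ => ?_
  rw [← sum_range_zmod]
  refine Finset.sum_congr rfl fun y _ => ?_
  refine if_congr ?_ rfl rfl
  have := ZMod.intCast_zmod_eq_zero_iff_dvd ((x : ℤ) ^ 2 - Δ * (y : ℤ) ^ 2 - c) p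
  push_cast at this
  rw [pow_one, ← this, sub_eq_zero]

lemma sqrts (p : ℕ) [Fact p.Prime] (hp2 : p ≠ 2) (a : ZMod p) :
    ∑ x : ZMod p, (if x ^ 2 = a then (1 : ℤ) else 0) = quadraticChar (ZMod p) a + 1 := by
  have h := quadraticChar_card_sqrts (F := ZMod p) (by rwa [ZMod.ringChar_zmod_n]) a
  rw [← h, Finset.sum_boole]
  congr 2
  ext x
  simp

lemma NN_one_zero (p : ℕ) [Fact p.Prime] (hp2 : p ≠ 2) (Δ c : ℤ) (hc : (p : ℤ) ∣ c) :
    (NN p Δ c 1 : ℤ) = p + quadraticChar (ZMod p) (Δ : ZMod p) * (p - 1) := by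
  have hc0 : (c : ZMod p) = 0 := by rwa [ZMod.intCast_zmod_eq_zero_iff_dvd]
  rw [NN_one, Finset.sum_comm]
  push_cast
  have : ∀ y : ZMod p, ∑ x : ZMod p, (if x ^ 2 - (Δ : ZMod p) * y ^ 2 = c then (1 : ℤ) else 0)
      = quadraticChar (ZMod p) (Δ : ZMod p) * (if y = 0 then 0 else 1) + 1 := by
    intro y
    simp only [hc0, sub_eq_zero]
    rw [sqrts p hp2, map_mul]
    split_ifs with h
    · simp [h]
    · rw [quadraticChar_sq_one' h]
  simp only [this]
  rw [Finset.sum_add_distrib, ← Finset.mul_sum]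
  have h3 : ∑ y : ZMod p, (if y = 0 then (0 : ℤ) else 1) = p - 1 := by
    have : ∀ y : ZMod p, (if y = 0 then (0 : ℤ) else 1) = 1 - if y = 0 then 1 else 0 := by
      intro y; split_ifs <;> simp
    simp only [this]
    rw [Finset.sum_sub_distrib]
    simp [ZMod.card]
  rw [h3]
  simp [ZMod.card]
  ring

lemma char_sum (p : ℕ) [Fact p.Prime] (hp2 : p ≠ 2) (t : ZMod p) (ht : t ≠ 0) :
    ∑ x : ZMod p, quadraticChar (ZMod p) (x ^ 2 - t ^ 2) = -1 := by
  have hr : ringChar (ZMod p) ≠ 2 := by rwa [ZMod.ringChar_zmod_n]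
  have h2 : (2 : ZMod p) ≠ 0 := Ring.two_ne_zero hr
  have hne : quadraticChar (ZMod p) ≠ 1 := quadraticChar_ne_one hr
  have hj := jacobiSum_nontrivial_inv hne
  rw [(quadraticChar_isQuadratic (ZMod p)).inv, jacobiSum] at hj
  set χ := quadraticChar (ZMod p) with hχ
  have h2t : (2 * t) ≠ 0 := mul_ne_zero h2 ht
  let e : ZMod p ≃ ZMod p := (Equiv.addRight t).trans (Equiv.divRight₀ (2 * t) h2t)
  rw [← e.sum_comp] at hj
  have key : ∀ x : ZMod p, χ (e x) * χ (1 - e x) = χ (-1) * χ (x ^ 2 - t ^ 2) := by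
    intro x
    have he : e x = (x + t) / (2 * t) := rfl
    have h1 : (e x) * (1 - e x) = -1 * (x ^ 2 - t ^ 2) * ((2 * t)⁻¹) ^ 2 := by
      rw [he]; field_simp; ring
    rw [← map_mul, h1, map_mul, map_mul, quadraticChar_sq_one' (inv_ne_zero h2t), mul_one]
  simp only [key] at hj
  rw [← Finset.mul_sum] at hj
  have hm : χ (-1) * χ (-1) = 1 := by rw [← map_mul]; simp
  linear_combination χ (-1) * hj - (∑ x : ZMod p, χ (x ^ 2 - t ^ 2) + 1) * hm

lemma NN_one_unit (p : ℕ) [Fact p.Prime] (hp2 : p ≠ 2) (Δ t : ℤ) (hΔ : ¬ (p : ℤ) ∣ Δ) (ht : ¬ (p : ℤ) ∣ t) :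
    (NN p Δ (t ^ 2) 1 : ℤ) = p - quadraticChar (ZMod p) (Δ : ZMod p) := by
  have ht0 : (t : ZMod p) ≠ 0 := by rwa [Ne, ZMod.intCast_zmod_eq_zero_iff_dvd]
  have hΔ0 : (Δ : ZMod p) ≠ 0 := by rwa [Ne, ZMod.intCast_zmod_eq_zero_iff_dvd]
  rw [NN_one]
  push_cast
  have : ∀ x : ZMod p, ∑ y : ZMod p, (if x ^ 2 - (Δ : ZMod p) * y ^ 2 = t ^ 2 then (1 : ℤ) else 0)
      = quadraticChar (ZMod p) (Δ : ZMod p) * quadraticChar (ZMod p) (x ^ 2 - t ^ 2) + 1 := by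
    intro x
    have h1 : ∀ y : ZMod p, x ^ 2 - (Δ : ZMod p) * y ^ 2 = t ^ 2 ↔
        y ^ 2 = Δ * (x ^ 2 - t ^ 2) * ((Δ : ZMod p)⁻¹) ^ 2 := by
      intro y
      have : Δ * (x ^ 2 - t ^ 2) * ((Δ : ZMod p)⁻¹) ^ 2 = (x ^ 2 - t ^ 2) / Δ := by field_simp
      rw [this, eq_div_iff hΔ0]
      constructor <;> intro h <;> linear_combination -h
    simp only [h1]
    rw [sqrts p hp2, map_mul, map_mul, quadraticChar_sq_one' (inv_ne_zero hΔ0), mul_one]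
  simp only [this]
  rw [Finset.sum_add_distrib, ← Finset.mul_sum, char_sum p hp2 _ ht0]
  simp [ZMod.card]
  ring

lemma series (p : ℕ) [Fact p.Prime] (hp : p.Prime) (hp2 : p ≠ 2) (Δ : ℤ) (hΔ : ¬ (p : ℤ) ∣ Δ)
    (ε : ℝ) (hε : ε = (quadraticChar (ZMod p) (Δ : ZMod p) : ℤ)) (hε2 : ε = 1 ∨ ε = -1)
    (u : ℤ) (hu : ¬ (p : ℤ) ∣ u) (z : ℝ) (hz : |z| < 1) (w : ℝ) (hw : w = z / p) (T : ℕ) :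
    HasSum (fun l : ℕ => z ^ l * ((NN p Δ ((p ^ T * u) ^ 2) l : ℝ) / p ^ (2 * l)))
      ((1 - ε * w / p) * (1 - ε * w ^ (2 * T + 1)) / ((1 - w) * (1 - ε * w))) := by
  have hpi : Prime (p : ℤ) := Nat.prime_iff_prime_int.mp hp
  have hp0 : (p : ℝ) ≠ 0 := by exact_mod_cast hp.ne_zero
  have hp1 : (1 : ℝ) ≤ p := by exact_mod_cast hp.one_le
  have hzw : z = w * p := by rw [hw]; field_simp
  have hw1 : |w| < 1 := by
    rw [hw, abs_div, abs_of_pos (by linarith : (0 : ℝ) < p), div_lt_one (by linarith)]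
    linarith
  have hgeo := hasSum_geometric_of_abs_lt_one hw1
  obtain ⟨hwa, hwb⟩ := abs_lt.mp hw1
  have hd1 : 1 - w ≠ 0 := by linarith
  have hd2 : 1 - ε * w ≠ 0 := by rcases hε2 with h | h <;> rw [h] <;> linarith
  have hN0 : ∀ c, NN p Δ c 0 = 1 := by intro c; simp [NN]
  induction T with
  | zero =>
    have hN : ∀ l, (NN p Δ ((p ^ 0 * u) ^ 2) (l + 1) : ℝ) = p ^ l * (p - ε) := by
      intro l
      have hu2 : ¬ (p : ℤ) ∣ (p ^ 0 * u) ^ 2 := by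
        intro h; apply hu; simpa using hpi.dvd_of_dvd_pow h
      have h1 := NN_one_unit p hp2 Δ u hΔ hu
      have h2 := NN_eq p Δ ((p ^ 0 * u) ^ 2) 1
      rw [QQ_unit p hp _ _ hu2 0] at h2
      rw [NN_eq, QQ_unit p hp _ _ hu2, PP_eq p hp hp2 _ _ hΔ, add_zero]
      simp only [pow_zero, one_mul, add_zero] at h2 ⊢
      rw [← h2, hε]
      push_cast
      rw [show (NN p Δ (u ^ 2) 1 : ℝ) = ((NN p Δ (u ^ 2) 1 : ℤ) : ℝ) by simp, h1]
      push_cast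
      ring
    have h := HasSum.zero_add (f := fun l : ℕ => z ^ l * ((NN p Δ ((p ^ 0 * u) ^ 2) l : ℝ) / p ^ (2 * l)))
      (m := (1 - w)⁻¹ * (w * (1 - ε / p))) (by
        refine (hgeo.mul_right (w * (1 - ε / p))).congr_fun ?_
        intro l
        rw [hN, hzw]
        field_simp
        try ring)
    convert h using 1
    rw [hN0]
    field_simp
    simp
    field_simp
    ring
  | succ T ih =>
    have hc : ((p : ℤ) ^ (T + 1) * u) ^ 2 = p ^ 2 * (p ^ T * u) ^ 2 := by ring
    have hc' : (p : ℤ) ∣ p ^ 2 * (p ^ T * u) ^ 2 := ⟨p * (p ^ T * u) ^ 2, by ring⟩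
    rw [hc]
    set c := ((p : ℤ) ^ T * u) ^ 2 with hcdef
    have hN1 : (NN p Δ (p ^ 2 * c) 1 : ℝ) = p + ε * (p - 1) := by
      rw [show (NN p Δ (p ^ 2 * c) 1 : ℝ) = ((NN p Δ (p ^ 2 * c) 1 : ℤ) : ℝ) by simp,
        NN_one_zero p hp2 Δ _ hc', hε]
      push_cast
      ring
    have hP1 : (PP p Δ (p ^ 2 * c) 1 : ℝ) = (1 + ε) * (p - 1) := by
      have h2 := NN_eq p Δ (p ^ 2 * c) 1
      rw [QQ_one p hp _ _ hc'] at h2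
      rw [h2] at hN1
      push_cast at hN1
      linarith
    have hN : ∀ l, (NN p Δ (p ^ 2 * c) (l + 2) : ℝ) = p ^ (l + 1) * ((1 + ε) * (p - 1)) + p ^ 2 * NN p Δ c l := by
      intro l
      rw [NN_eq, QQ_two p hp, PP_eq p hp hp2 _ _ hΔ (l + 1)]
      push_cast
      rw [hP1]
    have h := HasSum.zero_add (f := fun l : ℕ => z ^ (l + 1) * ((NN p Δ (p ^ 2 * c) (l + 1) : ℝ) / p ^ (2 * (l + 1))))
      (m := (1 - w)⁻¹ * (w ^ 2 * ((1 + ε) * (1 - 1 / p))) + w ^ 2 * ((1 - ε * w / p) * (1 - ε * w ^ (2 * T + 1)) / ((1 - w) * (1 - ε * w)))) (by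
        refine ((hgeo.mul_right _).add (ih.mul_left (w ^ 2))).congr_fun ?_
        intro l
        rw [show l + 1 + 1 = l + 2 from rfl, hN, hzw]
        field_simp
        try ring)
    have h' := HasSum.zero_add (f := fun l : ℕ => z ^ l * ((NN p Δ (p ^ 2 * c) l : ℝ) / p ^ (2 * l))) h
    convert h' using 1
    rw [hN0, zero_add, hN1, hzw]
    rcases hε2 with h | h
    · subst h
      field_simp
      ring
    · rw [h]
      have hd3 : 1 + w ≠ 0 := by linarith
      rw [show 1 - -1 * w = 1 + w by ring]
      field_simp
      ring

open Classical in
theorem stmt_11 (p : ℕ) (hp : p.Prime) (hp2 : p ≠ 2) (Δ : ℤ) (hΔ : ¬ (p : ℤ) ∣ Δ)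
    (ε : ℝ) (hε : ε = if IsSquare (Δ : ZMod p) then 1 else -1)
    (t : ℤ) (ht : t ≠ 0) (T : ℕ) (hT : padicValInt p t = T)
    (z : ℝ) (hz : |z| < 1) (w : ℝ) (hw : w = z / p) :
    HasSum
      (fun ℓ : ℕ => z ^ ℓ *
        ((Nat.card {xy : ZMod (p ^ ℓ) × ZMod (p ^ ℓ) //
            xy.1 ^ 2 - (Δ : ZMod (p ^ ℓ)) * xy.2 ^ 2 = (t : ZMod (p ^ ℓ)) ^ 2} : ℝ)
          / p ^ (2 * ℓ)))
      ((1 - ε * w / p) * (1 - ε * w ^ (2 * T + 1)) / ((1 - w) * (1 - ε * w))) := by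
  have := Fact.mk hp
  have hΔ0 : (Δ : ZMod p) ≠ 0 := by rwa [Ne, ZMod.intCast_zmod_eq_zero_iff_dvd]
  have hχ : ε = ((quadraticChar (ZMod p) (Δ : ZMod p) : ℤ) : ℝ) := by
    rw [hε]
    split_ifs with h
    · rw [(quadraticChar_one_iff_isSquare hΔ0).mpr h]; simp
    · rw [quadraticChar_neg_one_iff_not_isSquare.mpr h]; simp
  have hε2 : ε = 1 ∨ ε = -1 := by
    rw [hε]; split_ifs <;> simp
  simp only [card_eq p hp]
  obtain ⟨u, hu⟩ : (p : ℤ) ^ T ∣ t := by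
    rw [← hT]; exact padicValInt_dvd t
  have hu' : ¬ (p : ℤ) ∣ u := by
    rintro ⟨v, rfl⟩
    have h1 : (p : ℤ) ^ (T + 1) ∣ t := ⟨v, by rw [hu]; ring⟩
    rw [padicValInt_dvd_iff, hT] at h1
    rcases h1 with h1 | h1
    · exact ht h1
    · omega
  rw [hu]
  exact series p hp hp2 Δ hΔ ε hχ hε2 u hu' z hz w hw T
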